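/- One-parameter action property (part of the geometric crystal axioms in Theorem 5.3): for all c, c', x0,...,x5 ∈ ℝ_{>0} one has e1^c(e1^{c'}(x)) = e1^{cc'}(x), e2^c(e2^{c'}(x)) = e2^{cc'}(x), e0^c(e0^{c'}(x)) = e0^{cc'}(x), and e1^1(x) = e2^1(x) = e0^1(x) = x. -/

import Mathlib

noncomputable section

/-- the action `e1^c` on `(x0,...,x5)` -/
def e1act (c : ℝ) (x : Fin 6 → ℝ) : Fin 6 → ℝ :=
  let x0 := x 0; let x1 := x 1; let x2 := x 2; let x3 := x 3; let x4 := x 4; let x5 := x 5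
  let A1 := x0/x1 + x0*x2^3/(x1^2*x3) + x0*x2^3*x4^3/(x1^2*x3^2*x5)
  let B1 := c*x0/x1 + x0*x2^3/(x1^2*x3) + x0*x2^3*x4^3/(x1^2*x3^2*x5)
  let B3 := c*x0/x1 + c*x0*x2^3/(x1^2*x3) + x0*x2^3*x4^3/(x1^2*x3^2*x5)
  ![x0, (B1/A1)*x1, x2, (B3/B1)*x3, x4, (c*A1/B3)*x5]

/-- the action `e2^c` on `(x0,...,x5)` -/
def e2act (c : ℝ) (x : Fin 6 → ℝ) : Fin 6 → ℝ :=
  let x0 := x 0; let x1 := x 1; let x2 := x 2; let x3 := x 3; let x4 := x 4; let x5 := x 5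
  let A2 := x1/x2 + x1*x3/(x2^2*x4)
  let B2 := c*x1/x2 + x1*x3/(x2^2*x4)
  ![x0, x1, (B2/A2)*x2, x3, (c*A2/B2)*x4, x5]

end

noncomputable section

/-- the action `e0^c` on `(x0,...,x5)` -/
def e0act (c : ℝ) (x : Fin 6 → ℝ) : Fin 6 → ℝ :=
  let x0 := x 0; let x1 := x 1; let x2 := x 2; let x3 := x 3; let x4 := x 4; let x5 := x 5
  let D := c^2*x0^2*x2^3*x3 + x1*x2^3*x3^2*x5
    + c*x0*(x1*x3^3 + 3*x1*x2*x3^2*x4 + 3*x1*x2^2*x3*x4^2 + x2^3*(x3^2 + x1*x4^3 + x1*x3*x5))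
  let E := x0^2*x2^3*x3 + x1*x2^3*x3^2*x5
    + x0*(x1*x3^3 + 3*x1*x2*x3^2*x4 + 3*x1*x2^2*x3*x4^2 + x2^3*(x3^2 + x1*x4^3 + x1*x3*x5))
  let F := c*x0^2*x2^3*x3 + x1*x2^3*x3^2*x5
    + x0*(c*x1*x3^3 + 3*c*x1*x2*x3^2*x4 + 3*c*x1*x2^2*x3*x4^2
        + x2^3*(x3^2 + c*x1*x4^3 + c*x1*x3*x5))
  let G := c*x0^2*x2^3*x3 + x1*x2^3*x3^2*x5
    + x0*(x1*x3^3 + (2+c)*x1*x2*x3^2*x4 + (1+2*c)*x1*x2^2*x3*x4^2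
        + x2^3*(x3^2 + c*x1*x4^3 + c*x1*x3*x5))
  let H := c*x0^2*x2^3*x3 + x1*x2^3*x3^2*x5
    + x0*(x1*x3^3 + 3*x1*x2*x3^2*x4 + 3*x1*x2^2*x3*x4^2 + x2^3*(x3^2 + x1*x4^3 + c*x1*x3*x5))
  ![D/(c*E)*x0, F/(c*E)*x1, G/(c*E)*x2, D*H/(c^2*E*F)*x3, D/(c*G)*x4, D/(c*H)*x5]

end

theorem e1act_one {x : Fin 6 → ℝ} (hx : ∀ i, 0 < x i) : e1act 1 x = x := by
  have h0 := hx 0; have h1 := hx 1; have h2 := hx 2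
  have h3 := hx 3; have h4 := hx 4; have h5 := hx 5
  have hA : x 0 / x 1 + x 0 * x 2 ^ 3 / (x 1 ^ 2 * x 3)
      + x 0 * x 2 ^ 3 * x 4 ^ 3 / (x 1 ^ 2 * x 3 ^ 2 * x 5) ≠ 0 := by positivity
  funext i
  fin_cases i <;> simp [e1act, div_self hA]

theorem e2act_one {x : Fin 6 → ℝ} (hx : ∀ i, 0 < x i) : e2act 1 x = x := by
  have h1 := hx 1; have h2 := hx 2; have h3 := hx 3; have h4 := hx 4
  have hA : x 1 / x 2 + x 1 * x 3 / (x 2 ^ 2 * x 4) ≠ 0 := by positivity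
  funext i
  fin_cases i <;> simp [e2act, div_self hA]

/-- `e1act` with denominators cleared. -/
theorem e1act_eq (c : ℝ) {x : Fin 6 → ℝ} (hx : ∀ i, 0 < x i) :
    e1act c x =
      let p := x 1 * x 3 ^ 2 * x 5
      let q := x 2 ^ 3 * x 3 * x 5
      let r := x 2 ^ 3 * x 4 ^ 3
      ![x 0, (c * p + q + r) / (p + q + r) * x 1, x 2,
        (c * p + c * q + r) / (c * p + q + r) * x 3, x 4,
        c * (p + q + r) / (c * p + c * q + r) * x 5] := by
  have h0 := hx 0; have h1 := hx 1; have h2 := hx 2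
  have h3 := hx 3; have h4 := hx 4; have h5 := hx 5
  have key (a b : ℝ) : a * x 0 / x 1 + b * x 0 * x 2 ^ 3 / (x 1 ^ 2 * x 3)
      + x 0 * x 2 ^ 3 * x 4 ^ 3 / (x 1 ^ 2 * x 3 ^ 2 * x 5)
      = x 0 / (x 1 ^ 2 * x 3 ^ 2 * x 5) * (a * (x 1 * x 3 ^ 2 * x 5)
        + b * (x 2 ^ 3 * x 3 * x 5) + x 2 ^ 3 * x 4 ^ 3) := by
    field_simp
  have hs : x 0 / (x 1 ^ 2 * x 3 ^ 2 * x 5) ≠ 0 := by positivity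
  have k11 := key 1 1
  have kc1 := key c 1
  simp only [one_mul] at k11 kc1
  simp only [e1act, k11, kc1, key c c, mul_left_comm c, mul_div_mul_left _ _ hs]

theorem e1act_mul {c c' : ℝ} (hc : 0 < c) (hc' : 0 < c') {x : Fin 6 → ℝ} (hx : ∀ i, 0 < x i) :
    e1act c (e1act c' x) = e1act (c * c') x := by
  have h0 := hx 0; have h1 := hx 1; have h2 := hx 2
  have h3 := hx 3; have h4 := hx 4; have h5 := hx 5
  have hy : ∀ i, 0 < e1act c' x i := by
    intro i
    rw [e1act_eq c' hx]
    fin_cases i <;> simp <;> positivity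
  rw [e1act_eq c hy, e1act_eq (c * c') hx, e1act_eq c' hx]
  funext i
  fin_cases i <;> simp <;> field_simp <;> ring

theorem e2act_mul {c c' : ℝ} (hc : 0 < c) (hc' : 0 < c') {x : Fin 6 → ℝ} (hx : ∀ i, 0 < x i) :
    e2act c (e2act c' x) = e2act (c * c') x := by
  have h1 := hx 1; have h2 := hx 2; have h3 := hx 3; have h4 := hx 4
  funext i
  fin_cases i <;> simp [e2act] <;> field_simp

noncomputable section

namespace E0

/-! The polynomials in the definition of `e0act` are combinations of six monomial-like terms
`a, b, p, q, u, v`, related by `a * b = p * q`. -/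

def a (x : Fin 6 → ℝ) : ℝ := x 0 ^ 2 * x 2 ^ 3 * x 3
def b (x : Fin 6 → ℝ) : ℝ := x 1 * x 2 ^ 3 * x 3 ^ 2 * x 5
def p (x : Fin 6 → ℝ) : ℝ := x 0 * x 2 ^ 3 * x 3 ^ 2
def q (x : Fin 6 → ℝ) : ℝ := x 0 * x 1 * x 2 ^ 3 * x 3 * x 5
def u (x : Fin 6 → ℝ) : ℝ := x 0 * x 1 * x 2 * x 4 * (x 3 + x 2 * x 4) ^ 2
def v (x : Fin 6 → ℝ) : ℝ := x 0 * x 1 * x 3 * (x 3 + x 2 * x 4) ^ 2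

def D (c : ℝ) (x : Fin 6 → ℝ) : ℝ := c ^ 2 * a x + b x + c * (p x + q x + u x + v x)
def F (c : ℝ) (x : Fin 6 → ℝ) : ℝ := c * (a x + q x + u x + v x) + (b x + p x)
def G (c : ℝ) (x : Fin 6 → ℝ) : ℝ := c * (a x + q x + u x) + (b x + p x + v x)
def H (c : ℝ) (x : Fin 6 → ℝ) : ℝ := c * (a x + q x) + (b x + p x + u x + v x)

theorem a_mul_b (x : Fin 6 → ℝ) : a x * b x = p x * q x := by
  simp only [a, b, p, q]; ring

theorem e0act_eq (c : ℝ) (x : Fin 6 → ℝ) :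
    e0act c x = ![D c x / (c * D 1 x) * x 0, F c x / (c * D 1 x) * x 1, G c x / (c * D 1 x) * x 2,
      D c x * H c x / (c ^ 2 * D 1 x * F c x) * x 3, D c x / (c * G c x) * x 4,
      D c x / (c * H c x) * x 5] := by
  simp only [e0act, D, F, G, H, a, b, p, q, u, v]
  congr! 4 <;> ring_nf

section Pos

variable {c : ℝ} {x : Fin 6 → ℝ}

theorem terms_pos (hx : ∀ i, 0 < x i) :
    0 < a x ∧ 0 < b x ∧ 0 < p x ∧ 0 < q x ∧ 0 < u x ∧ 0 < v x := by
  have h0 := hx 0; have h1 := hx 1; have h2 := hx 2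
  have h3 := hx 3; have h4 := hx 4; have h5 := hx 5
  refine ⟨?_, ?_, ?_, ?_, ?_, ?_⟩ <;> simp only [a, b, p, q, u, v] <;> positivity

theorem D_pos (hc : 0 < c) (hx : ∀ i, 0 < x i) : 0 < D c x := by
  obtain ⟨ha, hb, hp, hq, hu, hv⟩ := terms_pos hx
  unfold D; positivity

theorem F_pos (hc : 0 < c) (hx : ∀ i, 0 < x i) : 0 < F c x := by
  obtain ⟨ha, hb, hp, hq, hu, hv⟩ := terms_pos hx
  unfold F; positivity

theorem G_pos (hc : 0 < c) (hx : ∀ i, 0 < x i) : 0 < G c x := by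
  obtain ⟨ha, hb, hp, hq, hu, hv⟩ := terms_pos hx
  unfold G; positivity

theorem H_pos (hc : 0 < c) (hx : ∀ i, 0 < x i) : 0 < H c x := by
  obtain ⟨ha, hb, hp, hq, hu, hv⟩ := terms_pos hx
  unfold H; positivity

end Pos

/-- The common factor by which `e0act d` rescales the terms. -/
def scale (d : ℝ) (x : Fin 6 → ℝ) : ℝ :=
  D d x ^ 3 * G d x ^ 3 * H d x / (d ^ 9 * D 1 x ^ 6 * F d x)

theorem H_mul_add_F_mul (d : ℝ) (x : Fin 6 → ℝ) :
    H d x * x 3 + F d x * (x 2 * x 4) = G d x * (x 3 + x 2 * x 4) := by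
  simp only [F, G, H, u, v]; ring

section Transform

variable {d : ℝ} {x : Fin 6 → ℝ}

theorem scale_pos (hd : 0 < d) (hx : ∀ i, 0 < x i) : 0 < scale d x := by
  have hD := D_pos hd hx; have hE := D_pos one_pos hx; have hF := F_pos hd hx
  have hG := G_pos hd hx; have hH := H_pos hd hx
  unfold scale; positivity

theorem terms_e0act (hd : 0 < d) (hx : ∀ i, 0 < x i) :
    a (e0act d x) = scale d x * (d ^ 2 * a x) ∧
    b (e0act d x) = scale d x * b x ∧
    p (e0act d x) = scale d x * (d * H d x / F d x * p x) ∧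
    q (e0act d x) = scale d x * (d * F d x / H d x * q x) ∧
    u (e0act d x) = scale d x * (d * D d x * D 1 x / (G d x * H d x) * u x) ∧
    v (e0act d x) = scale d x * (d * D d x * D 1 x / (F d x * G d x) * v x) := by
  have hD := D_pos hd hx; have hE := D_pos one_pos hx; have hF := F_pos hd hx
  have hG := G_pos hd hx; have hH := H_pos hd hx
  have hs : e0act d x 3 + e0act d x 2 * e0act d x 4
      = D d x * G d x / (d ^ 2 * D 1 x * F d x) * (x 3 + x 2 * x 4) := by
    have key := H_mul_add_F_mul d x
    simp only [e0act_eq, Matrix.cons_val]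
    field_simp
    linear_combination key
  simp only [a, b, p, q, u, v, hs, scale]
  simp only [e0act_eq, Matrix.cons_val]
  refine ⟨?_, ?_, ?_, ?_, ?_, ?_⟩ <;> field_simp

variable (c : ℝ)

theorem D_e0act (hd : 0 < d) (hx : ∀ i, 0 < x i) :
    D c (e0act d x) = scale d x * D (c * d) x := by
  obtain ⟨ha, hb, hp, hq, hu, hv⟩ := terms_e0act hd hx
  have hF := F_pos hd hx; have hG := G_pos hd hx; have hH := H_pos hd hx
  have hab := a_mul_b x
  have key : H d x / F d x * p x + F d x / H d x * q x
      + D d x * D 1 x / (G d x * H d x) * u x + D d x * D 1 x / (F d x * G d x) * v x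
      = p x + q x + u x + v x := by
    field_simp
    simp only [D, F, G, H]
    grind
  rw [D.eq_1 c, ha, hb, hp, hq, hu, hv, D.eq_1 (c * d)]
  linear_combination c * d * scale d x * key

theorem a_add_q (hd : 0 < d) (hx : ∀ i, 0 < x i) :
    d * a x + F d x / H d x * q x = D d x / H d x * (a x + q x) := by
  have hH := H_pos hd hx
  field_simp
  simp only [D, F, H]
  linear_combination (d - 1) * a_mul_b x

theorem b_add_p (hd : 0 < d) (hx : ∀ i, 0 < x i) :
    b x + d * H d x / F d x * p x = D d x / F d x * (b x + p x) := by
  have hF := F_pos hd hx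
  field_simp
  simp only [D, F, H]
  linear_combination (d - d ^ 2) * a_mul_b x

theorem u_add_v (hd : 0 < d) (hx : ∀ i, 0 < x i) :
    u x / (G d x * H d x) + v x / (F d x * G d x) = (u x + v x) / (F d x * H d x) := by
  have hF := F_pos hd hx; have hG := G_pos hd hx; have hH := H_pos hd hx
  field_simp
  simp only [F, G, H]
  ring

theorem F_e0act (hd : 0 < d) (hx : ∀ i, 0 < x i) :
    F c (e0act d x) = scale d x * D d x / F d x * F (c * d) x := by
  obtain ⟨ha, hb, hp, hq, hu, hv⟩ := terms_e0act hd hx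
  have hF := F_pos hd hx; have hH := H_pos hd hx
  have hc : D d x / H d x * (a x + q x) + D d x * D 1 x * ((u x + v x) / (F d x * H d x))
      = D d x / F d x * (a x + q x + u x + v x) := by
    field_simp
    simp only [D, F, H]
    ring
  rw [F.eq_1 c, ha, hb, hp, hq, hu, hv, F.eq_1 (c * d)]
  linear_combination c * d * scale d x * a_add_q hd hx + scale d x * b_add_p hd hx
    + c * d * scale d x * D d x * D 1 x * u_add_v hd hx + c * d * scale d x * hc

theorem G_e0act (hd : 0 < d) (hx : ∀ i, 0 < x i) :
    G c (e0act d x) = scale d x * D d x / G d x * G (c * d) x := by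
  obtain ⟨ha, hb, hp, hq, hu, hv⟩ := terms_e0act hd hx
  have hF := F_pos hd hx; have hG := G_pos hd hx; have hH := H_pos hd hx
  have hc : D d x / H d x * (a x + q x) + D d x * D 1 x * (u x / (G d x * H d x))
      = D d x / G d x * (a x + q x + u x) := by
    field_simp
    simp only [D, G, H]
    ring
  have hk : D d x / F d x * (b x + p x) + d * D d x * D 1 x * (v x / (F d x * G d x))
      = D d x / G d x * (b x + p x + v x) := by
    field_simp
    simp only [D, F, G]
    ring
  rw [G.eq_1 c, ha, hb, hp, hq, hu, hv, G.eq_1 (c * d)]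
  linear_combination c * d * scale d x * a_add_q hd hx + scale d x * b_add_p hd hx
    + c * d * scale d x * hc + scale d x * hk

theorem H_e0act (hd : 0 < d) (hx : ∀ i, 0 < x i) :
    H c (e0act d x) = scale d x * D d x / H d x * H (c * d) x := by
  obtain ⟨ha, hb, hp, hq, hu, hv⟩ := terms_e0act hd hx
  have hF := F_pos hd hx; have hH := H_pos hd hx
  have hk : D d x / F d x * (b x + p x) + d * D d x * D 1 x * ((u x + v x) / (F d x * H d x))
      = D d x / H d x * (b x + p x + u x + v x) := by
    field_simp
    simp only [D, F, H]
    ring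
  rw [H.eq_1 c, ha, hb, hp, hq, hu, hv, H.eq_1 (c * d)]
  linear_combination c * d * scale d x * a_add_q hd hx + scale d x * b_add_p hd hx
    + d * scale d x * D d x * D 1 x * u_add_v hd hx + scale d x * hk

end Transform

end E0

end

open E0 in
theorem e0act_one {x : Fin 6 → ℝ} (hx : ∀ i, 0 < x i) : e0act 1 x = x := by
  have hD := (D_pos one_pos hx).ne'
  have hF : F 1 x = D 1 x := by simp only [F, D]; ring
  have hG : G 1 x = D 1 x := by simp only [G, D]; ring
  have hH : H 1 x = D 1 x := by simp only [H, D]; ring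
  rw [e0act_eq, hF, hG, hH]
  funext i
  fin_cases i <;> simp [hD]

open E0 in
theorem e0act_mul {c d : ℝ} (hc : 0 < c) (hd : 0 < d) {x : Fin 6 → ℝ} (hx : ∀ i, 0 < x i) :
    e0act c (e0act d x) = e0act (c * d) x := by
  have hD := D_pos hd hx; have hE := D_pos one_pos hx; have hF := F_pos hd hx
  have hG := G_pos hd hx; have hH := H_pos hd hx; have hs := scale_pos hd hx
  have hcd := mul_pos hc hd
  have hF' := F_pos hcd hx; have hG' := G_pos hcd hx; have hH' := H_pos hcd hx
  rw [e0act_eq c, D_e0act c hd hx, D_e0act 1 hd hx, F_e0act c hd hx, G_e0act c hd hx,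
    H_e0act c hd hx, e0act_eq (c * d), e0act_eq d, one_mul]
  funext i
  fin_cases i <;> simp <;> field_simp

/-- One-parameter action property of `e0, e1, e2`. -/
theorem e_actions_one_parameter (c c' : ℝ) (hc : 0 < c) (hc' : 0 < c')
    (x : Fin 6 → ℝ) (hx : ∀ i, 0 < x i) :
    e1act c (e1act c' x) = e1act (c*c') x ∧
    e2act c (e2act c' x) = e2act (c*c') x ∧
    e0act c (e0act c' x) = e0act (c*c') x ∧
    e1act 1 x = x ∧ e2act 1 x = x ∧ e0act 1 x = x := by
  exact ⟨e1act_mul hc hc' hx, e2act_mul hc hc' hx, e0act_mul hc hc' hx,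
    e1act_one hx, e2act_one hx, e0act_one hx⟩
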